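/- Consider homomorphisms of MV-algebras forming a commutative square m∘g = h∘e, where e: A → B is surjective with ker(e) ⊆ Rad(A), m: C → D satisfies ker(m) ∩ Rad(C) = {0}, g: A → C, and h: B → D. Then there exists a unique homomorphism d: B → C with d∘e = g and m∘d = h. (This is the orthogonality of the two classes of the stable factorization system on MV-algebras given by E = {surjections with kernel contained in the radical} and M = {homomorphisms whose kernel meets the radical trivially}.) -/

import Mathlib

namespace MVPaper

/-- An MV-algebra: a set with a binary `⊕`, a unary `¬`, and a constant `0`
satisfying the MV-algebra axioms. -/
class MV (α : Type*) where
  oplus : α → α → α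
  neg : α → α
  zero : α
  oplus_assoc : ∀ x y z : α, oplus x (oplus y z) = oplus (oplus x y) z
  oplus_comm : ∀ x y : α, oplus x y = oplus y x
  oplus_zero : ∀ x : α, oplus x zero = x
  neg_neg : ∀ x : α, neg (neg x) = x
  oplus_neg_zero : ∀ x : α, oplus x (neg zero) = neg zero
  lukasiewicz : ∀ x y : α,
    oplus (neg (oplus (neg x) y)) y = oplus (neg (oplus (neg y) x)) x

namespace MV

variable {α : Type*} [MV α]

/-- `1 := ¬0`. -/
def one : α := neg zero

/-- `x ⊙ y := ¬(¬x ⊕ ¬y)`. -/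
def odot (x y : α) : α := neg (oplus (neg x) (neg y))

/-- `x ⊖ y := ¬(¬x ⊕ y)`. -/
def ominus (x y : α) : α := neg (oplus (neg x) y)

/-- `d(x,y) := (x ⊖ y) ⊕ (y ⊖ x)`. -/
def dist (x y : α) : α := oplus (ominus x y) (ominus y x)

/-- The natural order: `x ≤ y` iff `¬x ⊕ y = 1`. -/
def le (x y : α) : Prop := oplus (neg x) y = one

/-- `x ∨ y := (x ⊖ y) ⊕ y`. -/
def sup (x y : α) : α := oplus (ominus x y) y

/-- `x ∧ y := x ⊙ (¬x ⊕ y)`. -/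
def inf (x y : α) : α := odot x (oplus (neg x) y)

/-- `n · a`, the `n`-fold sum `a ⊕ ⋯ ⊕ a`. -/
def nsmul : ℕ → α → α
  | 0, _ => zero
  | n + 1, a => oplus a (nsmul n a)

end MV

/-- Products of MV-algebras, with componentwise operations. -/
instance prodMV {α β : Type*} [MV α] [MV β] : MV (α × β) where
  oplus x y := (MV.oplus x.1 y.1, MV.oplus x.2 y.2)
  neg x := (MV.neg x.1, MV.neg x.2)
  zero := (MV.zero, MV.zero)
  oplus_assoc x y z :=
    congrArg₂ Prod.mk (MV.oplus_assoc _ _ _) (MV.oplus_assoc _ _ _)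
  oplus_comm x y :=
    congrArg₂ Prod.mk (MV.oplus_comm _ _) (MV.oplus_comm _ _)
  oplus_zero x := by
    obtain ⟨a, b⟩ := x
    exact congrArg₂ Prod.mk (MV.oplus_zero a) (MV.oplus_zero b)
  neg_neg x := by
    obtain ⟨a, b⟩ := x
    exact congrArg₂ Prod.mk (MV.neg_neg a) (MV.neg_neg b)
  oplus_neg_zero x :=
    congrArg₂ Prod.mk (MV.oplus_neg_zero _) (MV.oplus_neg_zero _)
  lukasiewicz x y :=
    congrArg₂ Prod.mk (MV.lukasiewicz _ _) (MV.lukasiewicz _ _)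

/-- A homomorphism of MV-algebras: a map preserving `⊕`, `¬` and `0`. -/
structure IsHom {α β : Type*} [MV α] [MV β] (f : α → β) : Prop where
  map_zero : f MV.zero = MV.zero
  map_oplus : ∀ x y : α, f (MV.oplus x y) = MV.oplus (f x) (f y)
  map_neg : ∀ x : α, f (MV.neg x) = MV.neg (f x)

/-- An ideal of an MV-algebra: contains `0`, closed under `⊕`, downward closed. -/
structure IsIdeal {α : Type*} [MV α] (I : Set α) : Prop where
  zero_mem : MV.zero ∈ I
  oplus_mem : ∀ ⦃x⦄, x ∈ I → ∀ ⦃y⦄, y ∈ I → MV.oplus x y ∈ I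
  lower_mem : ∀ ⦃x⦄, x ∈ I → ∀ ⦃y⦄, MV.le y x → y ∈ I

/-- The kernel of a homomorphism. -/
def ker {α β : Type*} [MV α] [MV β] (f : α → β) : Set α := {x | f x = MV.zero}

/-- The radical of an MV-algebra: `Rad(A) = {a | n·a ≤ ¬a for all n}`
(the intersection of all maximal proper ideals). -/
def Rad (α : Type*) [MV α] : Set α :=
  {a | ∀ n : ℕ, MV.le (MV.nsmul n a) (MV.neg a)}

/-- `P(A) := Rad(A) ∪ ¬Rad(A)`. -/
def PSet (α : Type*) [MV α] : Set α :=
  Rad α ∪ {x | MV.neg x ∈ Rad α}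

/-- An MV-algebra is trivial if `0 = 1`. -/
def IsTrivial (α : Type*) [MV α] : Prop := (MV.zero : α) = MV.one

/-- An MV-algebra is semisimple if its radical is trivial. -/
def Semisimple (α : Type*) [MV α] : Prop := Rad α = ({MV.zero} : Set α)

/-- An MV-algebra is perfect if `A = Rad(A) ∪ ¬Rad(A)`. -/
def Perfect (α : Type*) [MV α] : Prop := ∀ a : α, a ∈ PSet α

/-- `q : α → Q` realizes `Q` as the quotient of `α` by the ideal `I`,
i.e. by the congruence `x ∼ y ↔ d(x,y) ∈ I`. -/
structure IsQuotientBy {α Q : Type*} [MV α] [MV Q] (I : Set α) (q : α → Q) : Prop where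
  hom : IsHom q
  surj : Function.Surjective q
  eq_iff : ∀ x y : α, q x = q y ↔ MV.dist x y ∈ I

namespace MV

variable {α : Type*} [MV α]

theorem neg_oplus_self (x : α) : oplus (neg x) x = neg zero := by
  have := lukasiewicz (neg zero) x
  rwa [neg_neg, oplus_comm zero x, oplus_zero, oplus_neg_zero] at this

theorem ominus_self (x : α) : ominus x x = zero := by
  rw [ominus, neg_oplus_self, neg_neg]

theorem eq_of_ominus_eq_zero {x y : α} (hxy : ominus x y = zero) (hyx : ominus y x = zero) :
    x = y := by
  have := lukasiewicz x y
  rw [← ominus, ← ominus, hxy, hyx, oplus_comm, oplus_zero, oplus_comm, oplus_zero] at this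
  exact this.symm

end MV

namespace IsHom

variable {α β : Type*} [MV α] [MV β] {f : α → β}

theorem map_ominus (hf : IsHom f) (x y : α) :
    f (MV.ominus x y) = MV.ominus (f x) (f y) := by
  simp only [MV.ominus, hf.map_neg, hf.map_oplus]

theorem map_nsmul (hf : IsHom f) (n : ℕ) (a : α) : f (MV.nsmul n a) = MV.nsmul n (f a) := by
  induction n with
  | zero => exact hf.map_zero
  | succ n ih => simp only [MV.nsmul, hf.map_oplus, ih]

theorem map_mem_Rad (hf : IsHom f) {a : α} (ha : a ∈ Rad α) : f a ∈ Rad β := by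
  intro n
  have := congrArg f (ha n)
  simpa only [MV.le, MV.one, hf.map_oplus, hf.map_neg, hf.map_nsmul, hf.map_zero] using this

/-- A homomorphism that kills the kernel of `f` is constant on the fibres of `f`. -/
theorem eq_of_ker_subset {γ : Type*} [MV γ] {g : α → γ} (hf : IsHom f) (hg : IsHom g)
    (hker : ker f ⊆ ker g) {x y : α} (hxy : f x = f y) : g x = g y := by
  have key {u v : α} (huv : f u = f v) : MV.ominus (g u) (g v) = MV.zero := by
    rw [← hg.map_ominus]
    refine hker ?_
    change f (MV.ominus u v) = MV.zero
    rw [hf.map_ominus, huv, MV.ominus_self]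
  exact MV.eq_of_ominus_eq_zero (key hxy) (key hxy.symm)

end IsHom

/-- Orthogonality for the stable factorization system
`(E, M) = ({surjections with kernel ⊆ radical}, {maps with kernel ∩ radical = {0}})`
on MV-algebras: given a commutative square `m ∘ g = h ∘ e` with `e : A → B`
surjective, `ker e ⊆ Rad A`, and `m : C → D` with `ker m ∩ Rad C = {0}`, there
is a unique homomorphism `d : B → C` with `d ∘ e = g` and `m ∘ d = h`. -/
theorem factorization_orthogonality {α β γ δ : Type*} [MV α] [MV β] [MV γ] [MV δ]
    {e : α → β} (he : IsHom e) (hes : Function.Surjective e)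
    (hke : ker e ⊆ Rad α)
    {m : γ → δ} (hm : IsHom m) (hkm : ker m ∩ Rad γ = ({MV.zero} : Set γ))
    {g : α → γ} (hg : IsHom g) {h : β → δ} (hh : IsHom h)
    (hcomm : m ∘ g = h ∘ e) :
    ∃! d : β → γ, IsHom d ∧ d ∘ e = g ∧ m ∘ d = h := by
  have hker : ker e ⊆ ker g := fun a ha => by
    have hmem : g a ∈ ker m ∩ Rad γ := by
      refine ⟨?_, hg.map_mem_Rad (hke ha)⟩
      calc m (g a) = h (e a) := congrFun hcomm a
        _ = h MV.zero := congrArg h ha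
        _ = MV.zero := hh.map_zero
    rwa [hkm] at hmem
  obtain ⟨s, hs⟩ := hes.hasRightInverse
  have hd : ∀ x, g (s (e x)) = g x := fun x => he.eq_of_ker_subset hg hker (hs (e x))
  refine ⟨g ∘ s, ⟨⟨?_, ?_, ?_⟩, funext hd, ?_⟩, ?_⟩
  · simpa only [Function.comp_apply, he.map_zero, hg.map_zero] using hd MV.zero
  · refine hes.forall₂.2 fun x y => ?_
    simp only [Function.comp_apply, ← he.map_oplus, hd, hg.map_oplus]
  · refine hes.forall.2 fun x => ?_
    simp only [Function.comp_apply, ← he.map_neg, hd, hg.map_neg]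
  · funext b
    exact (congrFun hcomm (s b)).trans (congrArg h (hs b))
  · rintro d ⟨-, hde, -⟩
    exact hes.injective_comp_right (hde.trans (funext hd).symm)

end MVPaper
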